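/- Let S ⊆ I1 with |S| = k (1 ≤ k < K), suppose the concatenation of the blocks {A_l : l ∈ S} has linearly independent columns, let P_S denote the orthogonal projection onto its column span, and set v = Σ_{l∈I1∖S} A_l x̃_l. Then for every l ∈ S, ‖A_l^T P_S v‖_2 = ‖A_l^T v‖_2 ≤ dμ_B (K−k) · max_{j∈I1∖S} ‖x̃_j‖_2. -/

import Mathlib

/- Setting: a measurement matrix `A ∈ ℝ^{m×n}` with `n = L·d`, partitioned into `L` column
blocks of size `m×d`; columns are indexed by pairs `(l, j)` (block `l`, position `j`). -/

noncomputable section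

open Finset Matrix

/-- Euclidean (ℓ₂) norm of a finitely indexed real vector. -/
def e2norm {ι : Type*} [Fintype ι] (v : ι → ℝ) : ℝ := Real.sqrt (∑ i, v i ^ 2)

/-- Euclidean inner (dot) product of two real vectors. -/
def dotp {ι : Type*} [Fintype ι] (u v : ι → ℝ) : ℝ := ∑ i, u i * v i

/-- The `(l, j)` column of the block matrix `A` (block `l`, position `j` inside the block). -/
def acol {m L d : ℕ} (A : Matrix (Fin m) (Fin L × Fin d) ℝ) (l : Fin L) (j : Fin d) :
    Fin m → ℝ :=
  fun i => A i (l, j)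

/-- `A_lᵀ v` : correlation of the `l`-th block of `A` with a vector `v ∈ ℝ^m`. -/
def blkT {m L d : ℕ} (A : Matrix (Fin m) (Fin L × Fin d) ℝ) (l : Fin L) (v : Fin m → ℝ) :
    Fin d → ℝ :=
  fun j => dotp (acol A l j) v

/-- Spectral norm (largest singular value) `ρ(X)` of a real matrix, as the supremum of
`‖Xu‖₂ / ‖u‖₂` over nonzero `u`. -/
def specNorm {p q : ℕ} (X : Matrix (Fin p) (Fin q) ℝ) : ℝ :=
  ⨆ u : {u : Fin q → ℝ // u ≠ 0}, e2norm (X *ᵥ u.1) / e2norm u.1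

/-- The `d × d` cross-Gram matrix `A_iᵀ A_j` of two blocks of `A`. -/
def bgram {m L d : ℕ} (A : Matrix (Fin m) (Fin L × Fin d) ℝ) (i j : Fin L) :
    Matrix (Fin d) (Fin d) ℝ :=
  fun a b => dotp (acol A i a) (acol A j b)

/-- Block-coherence `μ_B = max_{i ≠ j} (1/d) ρ(A_iᵀ A_j)`. -/
def blockCoh {m L d : ℕ} (A : Matrix (Fin m) (Fin L × Fin d) ℝ) : ℝ :=
  ⨆ p : {p : Fin L × Fin L // p.1 ≠ p.2},
    (1 / (d : ℝ)) * specNorm (bgram A p.1.1 p.1.2)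

/-- Sub-coherence `ν`: the maximum of `|a_iᵀ a_j|` over pairs of distinct columns lying in the
same block of `A`. -/
def subCoh {m L d : ℕ} (A : Matrix (Fin m) (Fin L × Fin d) ℝ) : ℝ :=
  ⨆ t : {t : Fin L × Fin d × Fin d // t.2.1 ≠ t.2.2},
    |dotp (acol A t.1.1 t.1.2.1) (acol A t.1.1 t.1.2.2)|

section EuclideanNorm

variable {ι κ : Type*} [Fintype ι]

theorem e2norm_eq_norm_toLp (v : ι → ℝ) : e2norm v = ‖WithLp.toLp 2 v‖ := by
  simp [e2norm, EuclideanSpace.norm_eq]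

theorem e2norm_nonneg (v : ι → ℝ) : 0 ≤ e2norm v :=
  Real.sqrt_nonneg _

theorem e2norm_pos {v : ι → ℝ} (hv : v ≠ 0) : 0 < e2norm v := by
  rw [e2norm_eq_norm_toLp, norm_pos_iff]
  exact (WithLp.toLp_eq_zero 2).not.mpr hv

theorem e2norm_sum_le (s : Finset κ) (f : κ → ι → ℝ) :
    e2norm (∑ a ∈ s, f a) ≤ ∑ a ∈ s, e2norm (f a) := by
  simp only [e2norm_eq_norm_toLp, WithLp.toLp_sum]
  exact norm_sum_le _ _

theorem sum_e2norm_le_card_mul_iSup (T : Finset κ) (x : κ → ι → ℝ) :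
    ∑ a ∈ T, e2norm (x a) ≤ #T * ⨆ a : {a // a ∈ T}, e2norm (x a) := by
  rw [← nsmul_eq_mul]
  refine Finset.sum_le_card_nsmul _ _ _ fun a ha => ?_
  exact le_ciSup (f := fun a : {a // a ∈ T} => e2norm (x a)) (Set.finite_range _).bddAbove ⟨a, ha⟩

end EuclideanNorm

section SpectralNorm

variable {p q : ℕ} (X : Matrix (Fin p) (Fin q) ℝ)

theorem specNorm_nonneg : 0 ≤ specNorm X :=
  Real.iSup_nonneg fun _ => div_nonneg (e2norm_nonneg _) (e2norm_nonneg _)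

open scoped Matrix.Norms.L2Operator in
theorem bddAbove_range_e2norm_mulVec_div :
    BddAbove (Set.range fun u : {u : Fin q → ℝ // u ≠ 0} => e2norm (X *ᵥ u.1) / e2norm u.1) := by
  refine ⟨‖X‖, ?_⟩
  rintro _ ⟨u, rfl⟩
  rw [div_le_iff₀ (e2norm_pos u.2), e2norm_eq_norm_toLp, e2norm_eq_norm_toLp]
  exact X.l2_opNorm_mulVec (WithLp.toLp 2 u.1)

theorem e2norm_mulVec_le (u : Fin q → ℝ) : e2norm (X *ᵥ u) ≤ specNorm X * e2norm u := by
  rcases eq_or_ne u 0 with rfl | hu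
  · simp [e2norm]
  · rw [← div_le_iff₀ (e2norm_pos hu)]
    exact le_ciSup (bddAbove_range_e2norm_mulVec_div X) ⟨u, hu⟩

end SpectralNorm

section Blocks

variable {m L d : ℕ} (A : Matrix (Fin m) (Fin L × Fin d) ℝ)

/-- The block `A_l` of `A`, as an `m × d` matrix; it turns `blkT` and `bgram` into ordinary matrix
products. -/
def block (l : Fin L) : Matrix (Fin m) (Fin d) ℝ :=
  A.submatrix id (Prod.mk l)

/-- The block combination `∑_{l ∈ T} A_l x_l`. It is defined entrywise, and `x` is indexed by all
blocks although only its values on `T` matter. -/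
def blockComb (T : Finset (Fin L)) (x : Fin L → Fin d → ℝ) : Fin m → ℝ :=
  fun i => ∑ l ∈ T, ∑ j, A i (l, j) * x l j

/-- `p` is the orthogonal projection of `v` onto the column span of the blocks `A_l`, `l ∈ S`. The
projection is characterized rather than constructed: `p` lies in the span and the residual `v - p`
is orthogonal to every block. -/
structure IsBlockProjection (S : Finset (Fin L)) (v p : Fin m → ℝ) : Prop where
  exists_eq_blockComb : ∃ c, p = blockComb A S c
  blkT_sub_eq_zero : ∀ l ∈ S, blkT A l (v - p) = 0

theorem blkT_eq_mulVec (l : Fin L) (v : Fin m → ℝ) : blkT A l v = (block A l)ᵀ *ᵥ v :=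
  rfl

theorem bgram_eq_mul (l a : Fin L) : bgram A l a = (block A l)ᵀ * block A a :=
  rfl

theorem blockComb_eq_sum_mulVec (T : Finset (Fin L)) (x : Fin L → Fin d → ℝ) :
    blockComb A T x = ∑ a ∈ T, block A a *ᵥ x a := by
  ext i
  simp only [Finset.sum_apply]
  rfl

theorem blkT_sub (l : Fin L) (v w : Fin m → ℝ) :
    blkT A l (v - w) = blkT A l v - blkT A l w := by
  simp only [blkT_eq_mulVec, mulVec_sub]

theorem blkT_blockComb (l : Fin L) (T : Finset (Fin L)) (x : Fin L → Fin d → ℝ) :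
    blkT A l (blockComb A T x) = ∑ a ∈ T, bgram A l a *ᵥ x a := by
  simp only [blkT_eq_mulVec, blockComb_eq_sum_mulVec, mulVec_sum, mulVec_mulVec, bgram_eq_mul]

variable {A} in
theorem IsBlockProjection.blkT_eq {S : Finset (Fin L)} {v p : Fin m → ℝ}
    (h : IsBlockProjection A S v p) {l : Fin L} (hl : l ∈ S) : blkT A l p = blkT A l v :=
  (sub_eq_zero.mp ((blkT_sub A l v p).symm.trans (h.blkT_sub_eq_zero l hl))).symm

theorem blockCoh_nonneg : 0 ≤ blockCoh A :=
  Real.iSup_nonneg fun _ => mul_nonneg (by positivity) (specNorm_nonneg _)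

theorem specNorm_bgram_le (hd : 0 < d) {l a : Fin L} (hla : l ≠ a) :
    specNorm (bgram A l a) ≤ d * blockCoh A := by
  have hcoh : 1 / (d : ℝ) * specNorm (bgram A l a) ≤ blockCoh A :=
    le_ciSup (f := fun p : {p : Fin L × Fin L // p.1 ≠ p.2} =>
      1 / (d : ℝ) * specNorm (bgram A p.1.1 p.1.2)) (Set.finite_range _).bddAbove ⟨(l, a), hla⟩
  rwa [one_div, inv_mul_le_iff₀ (Nat.cast_pos.mpr hd)] at hcoh

theorem e2norm_bgram_mulVec_le (hd : 0 < d) {l a : Fin L} (hla : l ≠ a) (u : Fin d → ℝ) :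
    e2norm (bgram A l a *ᵥ u) ≤ d * blockCoh A * e2norm u :=
  (e2norm_mulVec_le _ u).trans <|
    mul_le_mul_of_nonneg_right (specNorm_bgram_le A hd hla) (e2norm_nonneg u)

theorem e2norm_blkT_blockComb_le_sum (hd : 0 < d) {l : Fin L} {T : Finset (Fin L)} (hl : l ∉ T)
    (x : Fin L → Fin d → ℝ) :
    e2norm (blkT A l (blockComb A T x)) ≤ d * blockCoh A * ∑ a ∈ T, e2norm (x a) := by
  rw [blkT_blockComb, Finset.mul_sum]
  refine (e2norm_sum_le T _).trans (Finset.sum_le_sum fun a ha => ?_)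
  exact e2norm_bgram_mulVec_le A hd (ne_of_mem_of_not_mem ha hl).symm (x a)

theorem e2norm_blkT_blockComb_le (hd : 0 < d) {l : Fin L} {T : Finset (Fin L)} (hl : l ∉ T)
    (x : Fin L → Fin d → ℝ) :
    e2norm (blkT A l (blockComb A T x)) ≤
      d * blockCoh A * #T * ⨆ a : {a // a ∈ T}, e2norm (x a) :=
  calc e2norm (blkT A l (blockComb A T x))
      ≤ d * blockCoh A * ∑ a ∈ T, e2norm (x a) := e2norm_blkT_blockComb_le_sum A hd hl x
    _ ≤ d * blockCoh A * (#T * ⨆ a : {a // a ∈ T}, e2norm (x a)) :=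
        mul_le_mul_of_nonneg_left (sum_e2norm_le_card_mul_iSup T x)
          (mul_nonneg d.cast_nonneg (blockCoh_nonneg A))
    _ = d * blockCoh A * #T * ⨆ a : {a // a ∈ T}, e2norm (x a) := (mul_assoc _ _ _).symm

end Blocks

theorem stmt9_general {m L d : ℕ} (hd : 0 < d) (A : Matrix (Fin m) (Fin L × Fin d) ℝ)
    {I S : Finset (Fin L)} (hS : S ⊆ I) (x : Fin L → Fin d → ℝ) {p : Fin m → ℝ}
    (hp : IsBlockProjection A S (blockComb A (I \ S) x) p) {l : Fin L} (hl : l ∈ S) :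
    e2norm (blkT A l p) = e2norm (blkT A l (blockComb A (I \ S) x)) ∧
      e2norm (blkT A l (blockComb A (I \ S) x)) ≤
        d * blockCoh A * ((#I : ℝ) - #S) * ⨆ a : {a // a ∈ I \ S}, e2norm (x a) := by
  refine ⟨congrArg e2norm (hp.blkT_eq hl), ?_⟩
  rw [← Finset.cast_card_sdiff hS]
  exact e2norm_blkT_blockComb_le A hd (Finset.notMem_sdiff_of_mem_right hl) x

/-- **Eq. (37) of the paper (first case of Appendix B).**  For `S ⊆ I1` with `|S| = k`
(`1 ≤ k < K`), if the concatenation of the blocks `A_l, l ∈ S` has linearly independent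
columns and `P_S v` is the orthogonal projection of `v = Σ_{l ∈ I1∖S} A_l x̃_l` onto their
span, then for every `l ∈ S`,
`‖A_lᵀ P_S v‖₂ = ‖A_lᵀ v‖₂ ≤ dμ_B (K-k) · max_{j ∈ I1∖S} ‖x̃_j‖₂`. -/
theorem stmt9 {m L d K k : ℕ}
    (hm : m < L * d) (hd : 0 < d)
    (A : Matrix (Fin m) (Fin L × Fin d) ℝ)
    (hA : ∀ l j, e2norm (acol A l j) = 1)
    (μB : ℝ) (hμB : μB = blockCoh A)
    (I1 : Finset (Fin L)) (hcard : I1.card = K) (hKL : K < L)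
    (S : Finset (Fin L)) (hS : S ⊆ I1) (hSk : S.card = k) (hk1 : 1 ≤ k) (hk : k < K)
    (hind : LinearIndependent ℝ
      (fun c : {l : Fin L // l ∈ S} × Fin d => fun i => A i (c.1.1, c.2)))
    (xt : Fin L → Fin d → ℝ)
    (v : Fin m → ℝ) (hv : v = fun i => ∑ l ∈ I1 \ S, ∑ j, A i (l, j) * xt l j)
    (PSv : Fin m → ℝ)
    (hPSv1 : ∃ c : Fin L → Fin d → ℝ, ∀ i, PSv i = ∑ l ∈ S, ∑ j, A i (l, j) * c l j)
    (hPSv2 : ∀ l ∈ S, ∀ j, dotp (acol A l j) (fun i => v i - PSv i) = 0) :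
    ∀ l ∈ S, e2norm (blkT A l PSv) = e2norm (blkT A l v) ∧
      e2norm (blkT A l v) ≤ (d : ℝ) * μB * ((K : ℝ) - (k : ℝ)) *
        ⨆ j : {j : Fin L // j ∈ I1 \ S}, e2norm (xt j.1) := by
  subst hμB hcard hSk hv
  exact fun l hl => stmt9_general hd A hS xt
    ⟨hPSv1.imp fun _ => funext, fun i hi => funext (hPSv2 i hi)⟩ hl
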